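/- (Soundness of reduction rule R6, contraction.) Let G=(V,A) be a finite loopless digraph and suppose V is partitioned into two disjoint sets V₁ and V₂ with a ∈ V₁, b ∈ V₂, r ∈ V₁, |V₂| ≥ 2, such that the only arc of A with tail in V₁ and head in V₂ is (a,b). Let G* be the digraph obtained from G by contracting the arc (a,b): its vertex set is V \ {b} and its arc set is {(x,y) ∈ A : x ≠ b, y ≠ b} ∪ {(a,y) : (b,y) ∈ A, y ≠ a} ∪ {(x,a) : (x,b) ∈ A, x ≠ a}. Then for every natural number k, G has a spanning out-tree rooted at r with at least k leaves if and only if G* has a spanning out-tree rooted at r with at least k leaves. -/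

import Mathlib

variable {V : Type*} [DecidableEq V] [Fintype V]

/-- The vertex set of an arc set `T` together with the root `r`. -/
def dverts (r : V) (T : Finset (V × V)) : Finset V :=
  insert r (T.image Prod.fst ∪ T.image Prod.snd)

/-- In-degree of `v` in the arc set `T`. -/
def dInDeg (T : Finset (V × V)) (v : V) : ℕ :=
  (T.filter fun a => a.2 = v).card

/-- Out-degree of `v` in the arc set `T`. -/
def dOutDeg (T : Finset (V × V)) (v : V) : ℕ :=
  (T.filter fun a => a.1 = v).card

/-- Reachability by a directed path using only arcs of `T`. -/
def DReach (T : Finset (V × V)) (x y : V) : Prop :=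
  Relation.ReflTransGen (fun a b => (a, b) ∈ T) x y

/-- A loopless arc set. -/
def DLoopless (A : Finset (V × V)) : Prop := ∀ a ∈ A, a.1 ≠ a.2

/-- `T` is an out-tree of the digraph with arc set `A`, rooted at `r`. -/
def IsOutTree (A : Finset (V × V)) (r : V) (T : Finset (V × V)) : Prop :=
  T ⊆ A ∧ dInDeg T r = 0 ∧ (∀ v ∈ dverts r T, v ≠ r → dInDeg T v = 1) ∧
    ∀ v ∈ dverts r T, DReach T r v

/-- `T` is a spanning out-tree of the digraph with arc set `A`, rooted at `r`. -/
def IsSpanningOutTree (A : Finset (V × V)) (r : V) (T : Finset (V × V)) : Prop :=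
  IsOutTree A r T ∧ dverts r T = Finset.univ

/-- The leaves of an out-tree: vertices of out-degree 0. -/
def dleaves (r : V) (T : Finset (V × V)) : Finset V :=
  (dverts r T).filter fun v => dOutDeg T v = 0

/-- `T` is an out-tree of the digraph with arc set `A` rooted at `r`
whose vertex set is exactly `W`. -/
def IsSpanningOutTreeOn (W : Finset V) (A : Finset (V × V)) (r : V)
    (T : Finset (V × V)) : Prop :=
  IsOutTree A r T ∧ dverts r T = W

theorem aux_cross {R : V → V → Prop} {r y : V} (h : Relation.ReflTransGen R r y)
    (S : V → Prop) (hr : S r) (hy : ¬ S y) : ∃ u v, S u ∧ ¬ S v ∧ R u v := by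
  induction h with
  | refl => exact absurd hr hy
  | @tail u v _ huv ih =>
    by_cases hu : S u
    · exact ⟨u, v, hu, hy, huv⟩
    · exact ih hu

theorem aux_char (W : Finset V) (A : Finset (V × V)) (r : V) (T : Finset (V × V)) :
    IsSpanningOutTreeOn W A r T ↔ T ⊆ A ∧ r ∈ W ∧ (∀ x y, (x, y) ∈ T → x ∈ W ∧ y ∈ W) ∧
      (∀ x, (x, r) ∉ T) ∧ (∀ x y v, (x, v) ∈ T → (y, v) ∈ T → x = y) ∧
      ∀ v ∈ W, DReach T r v := by
  constructor
  · rintro ⟨⟨h1, h2, h3, h4⟩, rfl⟩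
    have hroot : ∀ x, (x, r) ∉ T := by
      intro x hx
      have := Finset.card_eq_zero.1 h2
      have h : (x, r) ∈ T.filter fun a => a.2 = r := by simp [hx]
      rw [this] at h
      simp at h
    have hW : ∀ x y, (x, y) ∈ T → x ∈ dverts r T ∧ y ∈ dverts r T := by
      intro x y h
      simp only [dverts, Finset.mem_insert, Finset.mem_union, Finset.mem_image]
      exact ⟨Or.inr (Or.inl ⟨_, h, rfl⟩), Or.inr (Or.inr ⟨_, h, rfl⟩)⟩
    refine ⟨h1, by simp [dverts], hW, hroot, ?_, h4⟩
    intro x y v hx hy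
    have hv : v ≠ r := by
      rintro rfl
      exact hroot _ hx
    have := h3 v (hW _ _ hx).2 hv
    have := Finset.card_le_one.1 (le_of_eq this) (x, v) (by simp [hx]) (y, v) (by simp [hy])
    exact congrArg Prod.fst this
  · rintro ⟨h1, h2, h3, h4, h5, h6⟩
    have hin : ∀ v ∈ W, v ≠ r → ∃ x, (x, v) ∈ T := by
      intro v hv hvr
      rcases Relation.ReflTransGen.cases_tail (h6 v hv) with h | ⟨c, _, hc⟩
      · exact absurd h hvr
      · exact ⟨c, hc⟩
    have hW : dverts r T = W := by
      ext v
      simp only [dverts, Finset.mem_insert, Finset.mem_union, Finset.mem_image]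
      constructor
      · rintro (rfl | ⟨⟨x, y⟩, h, rfl⟩ | ⟨⟨x, y⟩, h, rfl⟩)
        · exact h2
        · exact (h3 _ _ h).1
        · exact (h3 _ _ h).2
      · intro hv
        by_cases hvr : v = r
        · exact Or.inl hvr
        · obtain ⟨x, hx⟩ := hin v hv hvr
          exact Or.inr (Or.inr ⟨_, hx, rfl⟩)
    refine ⟨⟨h1, ?_, ?_, ?_⟩, hW⟩
    · refine Finset.card_eq_zero.2 (Finset.filter_eq_empty_iff.2 ?_)
      rintro ⟨x, y⟩ h rfl
      exact h4 _ h
    · rw [hW]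
      intro v hv hvr
      obtain ⟨x, hx⟩ := hin v hv hvr
      refine Finset.card_eq_one.2 ⟨(x, v), ?_⟩
      ext ⟨y, w⟩
      simp only [Finset.mem_filter, Finset.mem_singleton, Prod.mk.injEq]
      constructor
      · rintro ⟨h, rfl⟩
        exact ⟨h5 _ _ _ h hx, rfl⟩
      · rintro ⟨rfl, rfl⟩
        exact ⟨hx, rfl⟩
    · rw [hW]
      exact h6

theorem aux_leaf {W : Finset V} {A : Finset (V × V)} {r : V} {T : Finset (V × V)}
    (h : IsSpanningOutTreeOn W A r T) (v : V) :
    v ∈ dleaves r T ↔ v ∈ W ∧ ∀ y, (v, y) ∉ T := by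
  simp only [dleaves, h.2, Finset.mem_filter, dOutDeg, Finset.card_eq_zero,
    Finset.filter_eq_empty_iff]
  constructor
  · rintro ⟨h1, h2⟩
    exact ⟨h1, fun y hy => h2 hy rfl⟩
  · rintro ⟨h1, h2⟩
    refine ⟨h1, ?_⟩
    rintro ⟨x, y⟩ hy rfl
    exact h2 _ hy

theorem aux_back {T : Finset (V × V)} {V₁ V₂ : Finset V} {r a : V}
    (hpart : ∀ x, x ∈ V₁ ∨ x ∈ V₂) (hdisj : ∀ x, x ∈ V₁ → x ∉ V₂) (hr : r ∈ V₁)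
    (hroot : ∀ x, (x, r) ∉ T) (huniq : ∀ x y v, (x, v) ∈ T → (y, v) ∈ T → x = y)
    (honly : ∀ x y, (x, y) ∈ T → x ∈ V₁ → y ∈ V₂ → x = a)
    (hreach : DReach T r a) (x : V) (hx : x ∈ V₂) : (x, a) ∉ T := by
  intro hxa
  obtain ⟨u, v, ⟨hu, hua⟩, hv, huv⟩ := aux_cross hreach (fun v => v ∈ V₁ ∧ v ≠ a)
    ⟨hr, by rintro rfl; exact hroot _ hxa⟩ (by simp)
  have hv1 : v ∈ V₁ := (hpart v).resolve_right fun h => hua (honly _ _ huv hu h)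
  have hva : v = a := by
    by_contra h
    exact hv ⟨hv1, h⟩
  subst hva
  have := huniq _ _ _ huv hxa
  subst this
  exact hdisj _ hu hx

theorem stmt10 (A : Finset (V × V)) (V₁ V₂ : Finset V) (r a b : V)
    (hA : DLoopless A) (hpart : V₁ ∪ V₂ = Finset.univ)
    (hdisj : Disjoint V₁ V₂) (ha : a ∈ V₁) (hb : b ∈ V₂) (hr : r ∈ V₁)
    (hV₂ : 2 ≤ V₂.card) (hab : (a, b) ∈ A)
    (honly : ∀ p ∈ A, p.1 ∈ V₁ → p.2 ∈ V₂ → p = (a, b)) (k : ℕ) :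
    (∃ T : Finset (V × V), IsSpanningOutTreeOn Finset.univ A r T ∧
        k ≤ (dleaves r T).card) ↔
      (∃ T : Finset (V × V),
        IsSpanningOutTreeOn (Finset.univ.erase b)
          ((A.filter fun p => p.1 ≠ b ∧ p.2 ≠ b) ∪
            ((A.filter fun p => p.1 = b ∧ p.2 ≠ a).image fun p => (a, p.2)) ∪
            ((A.filter fun p => p.2 = b ∧ p.1 ≠ a).image fun p => (p.1, a)))
          r T ∧
        k ≤ (dleaves r T).card) := by
  have hp : ∀ x, x ∈ V₁ ∨ x ∈ V₂ := fun x => by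
    have := Finset.mem_univ x
    rwa [← hpart, Finset.mem_union] at this
  have hd : ∀ x, x ∈ V₁ → x ∉ V₂ := fun x h1 h2 => Finset.disjoint_left.1 hdisj h1 h2
  have hne : a ≠ b := by
    rintro rfl
    exact hd _ ha hb
  have hrb : r ≠ b := by
    rintro rfl
    exact hd _ hr hb
  obtain ⟨c, hc, hcb⟩ : ∃ c ∈ V₂, c ≠ b := Finset.exists_mem_ne (by omega) b
  constructor
  · rintro ⟨T, hT, hk⟩
    have hl := aux_leaf hT
    obtain ⟨h1, h2, h3, h4, h5, h6⟩ := (aux_char _ _ _ _).1 hT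
    have hback := aux_back hp hd hr h4 h5
      (fun x y h hx hy => congrArg Prod.fst (honly _ (h1 h) hx hy)) (h6 a (Finset.mem_univ _))
    have habT : (a, b) ∈ T := by
      obtain ⟨u, v, hu, hv, huv⟩ := aux_cross (h6 b (Finset.mem_univ _)) (· ∈ V₁) hr
        (fun h => hd _ h hb)
      have := honly _ (h1 huv) hu ((hp v).resolve_left hv)
      rwa [← this]
    obtain ⟨d, hbd⟩ : ∃ d, (b, d) ∈ T := by
      obtain ⟨u, v, hu, hv, huv⟩ := aux_cross (h6 c (Finset.mem_univ _))
        (fun v => v ∈ V₁ ∨ v = b) (Or.inl hr)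
        (by rintro (h | h); exacts [hd _ h hc, hcb h])
      rcases hu with hu | rfl
      · have := honly _ (h1 huv) hu ((hp v).resolve_left fun h => hv (Or.inl h))
        exact absurd (Or.inr (congrArg Prod.snd this)) hv
      · exact ⟨v, huv⟩
    set f : V → V := fun v => if v = b then a else v with hf
    have hfb : ∀ v, f v ≠ b := by
      intro v
      simp only [hf]
      split_ifs with h
      · exact hne
      · exact h
    have hfe : ∀ v, v ≠ b → f v = v := fun v h => by simp [hf, h]
    have hfB : f b = a := by simp [hf]
    let S := (T.filter fun p => p.2 ≠ b).image fun p => (f p.1, p.2)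
    have hS : ∀ x y, (x, y) ∈ S ↔ ∃ z, (z, y) ∈ T ∧ y ≠ b ∧ f z = x := by
      intro x y
      simp only [S, Finset.mem_image, Finset.mem_filter, Prod.mk.injEq, Prod.exists]
      constructor
      · rintro ⟨z, w, ⟨h, h'⟩, h'', rfl⟩
        exact ⟨z, h, h', h''⟩
      · rintro ⟨z, h, h', h''⟩
        exact ⟨z, y, ⟨h, h'⟩, h'', rfl⟩
    have hTS : IsSpanningOutTreeOn (Finset.univ.erase b)
          ((A.filter fun p => p.1 ≠ b ∧ p.2 ≠ b) ∪
            ((A.filter fun p => p.1 = b ∧ p.2 ≠ a).image fun p => (a, p.2)) ∪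
            ((A.filter fun p => p.2 = b ∧ p.1 ≠ a).image fun p => (p.1, a))) r S := by
      rw [aux_char]
      refine ⟨?_, by simp [hrb], ?_, ?_, ?_, ?_⟩
      · rintro ⟨x, y⟩ h
        obtain ⟨z, hz, hy, rfl⟩ := (hS _ _).1 h
        refine Finset.mem_union_left _ ?_
        by_cases hzb : z = b
        · subst hzb
          refine Finset.mem_union_right _ (Finset.mem_image.2 ⟨(z, y), ?_, by simp [hfB]⟩)
          simp only [Finset.mem_filter]
          refine ⟨h1 hz, trivial, ?_⟩
          rintro rfl
          exact hback _ hb hz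
        · refine Finset.mem_union_left _ ?_
          rw [hfe _ hzb]
          simp [h1 hz, hzb, hy]
      · intro x y h
        obtain ⟨z, hz, hy, rfl⟩ := (hS _ _).1 h
        simp [hfb, hy]
      · intro x h
        obtain ⟨z, hz, hy, rfl⟩ := (hS _ _).1 h
        exact h4 _ hz
      · intro x y v hx hy
        obtain ⟨z, hz, _, rfl⟩ := (hS _ _).1 hx
        obtain ⟨w, hw, _, rfl⟩ := (hS _ _).1 hy
        rw [h5 _ _ _ hz hw]
      · have key : ∀ v, DReach T r v → DReach S r (f v) := by
          intro v h
          induction h with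
          | refl =>
            rw [hfe _ hrb]
            exact Relation.ReflTransGen.refl
          | @tail u v _ huv ih =>
            by_cases hv : v = b
            · subst hv
              have := h5 _ _ _ huv habT
              subst this
              rw [hfe _ hne] at ih
              rwa [hfB]
            · rw [hfe _ hv]
              exact Relation.ReflTransGen.tail ih ((hS _ _).2 ⟨u, huv, hv, rfl⟩)
        intro v hv
        have := key v (h6 v (Finset.mem_univ _))
        rwa [hfe _ (Finset.ne_of_mem_erase hv)] at this
    refine ⟨S, hTS, hk.trans (Finset.card_le_card ?_)⟩
    intro v hv
    rw [aux_leaf hTS]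
    have hv' := ((hl v).1 hv).2
    have hvb : v ≠ b := by
      rintro rfl
      exact hv' _ hbd
    refine ⟨by simp [hvb], ?_⟩
    intro y h
    obtain ⟨z, hz, hy, hzv⟩ := (hS _ _).1 h
    by_cases hzb : z = b
    · subst hzb
      rw [hfB] at hzv
      subst hzv
      exact hv' _ habT
    · rw [hfe _ hzb] at hzv
      subst hzv
      exact hv' _ hz
  · rintro ⟨S, hTS, hk⟩
    have hl := aux_leaf hTS
    obtain ⟨h1, h2, h3, h4, h5, h6⟩ := (aux_char _ _ _ _).1 hTS
    have hA' : ∀ x y, (x, y) ∈ S → (x, y) ∈ A ∨ (x = a ∧ (b, y) ∈ A) ∨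
        (y = a ∧ x ≠ a ∧ (x, b) ∈ A) := by
      intro x y h
      have := h1 h
      simp only [Finset.mem_union, Finset.mem_filter, Finset.mem_image, Prod.mk.injEq,
        Prod.exists] at this
      rcases this with (h7 | ⟨z, w, ⟨h7, rfl, _⟩, rfl, rfl⟩) | ⟨z, w, ⟨h7, rfl, h'⟩, rfl, rfl⟩
      · exact Or.inl h7.1
      · exact Or.inr (Or.inl ⟨rfl, h7⟩)
      · exact Or.inr (Or.inr ⟨rfl, h', h7⟩)
    have hnb : ∀ x y, (x, y) ∈ S → x ≠ b ∧ y ≠ b := fun x y h =>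
      ⟨Finset.ne_of_mem_erase (h3 _ _ h).1, Finset.ne_of_mem_erase (h3 _ _ h).2⟩
    have hon : ∀ x y, (x, y) ∈ S → x ∈ V₁ → y ∈ V₂ → x = a := by
      intro x y h hx hy
      rcases hA' _ _ h with h | h | h
      · exact congrArg Prod.fst (honly _ h hx hy)
      · exact h.1
      · rw [h.1] at hy
        exact absurd hy (hd _ ha)
    have hback := aux_back hp hd hr h4 h5 hon (h6 a (by simp [hne]))
    obtain ⟨d, had, hdV⟩ : ∃ d, (a, d) ∈ S ∧ d ∈ V₂ := by
      obtain ⟨u, v, hu, hv, huv⟩ := aux_cross (h6 c (by simp [hcb])) (· ∈ V₁) hr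
        (fun h => hd _ h hc)
      have hv2 := (hp v).resolve_left hv
      have := hon _ _ huv hu hv2
      subst this
      exact ⟨v, huv, hv2⟩
    have hadA : (a, d) ∉ A := fun h =>
      (hnb _ _ had).2 (congrArg Prod.snd (honly _ h ha hdV))
    let T := insert (a, b) (S.image fun p => if p.1 = a ∧ p ∉ A then (b, p.2) else p)
    have hT : ∀ x y, (x, y) ∈ T ↔ (x = a ∧ y = b) ∨ ((x, y) ∈ S ∧ (x = a → (x, y) ∈ A)) ∨
        (x = b ∧ (a, y) ∈ S ∧ (a, y) ∉ A) := by
      intro x y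
      simp only [T, Finset.mem_insert, Finset.mem_image, Prod.mk.injEq, Prod.exists]
      refine or_congr_right ?_
      constructor
      · rintro ⟨z, w, h, h'⟩
        split_ifs at h' with hc
        · obtain ⟨rfl, hc⟩ := hc
          simp only [Prod.mk.injEq] at h'
          obtain ⟨rfl, rfl⟩ := h'
          exact Or.inr ⟨rfl, h, hc⟩
        · simp only [Prod.mk.injEq] at h'
          obtain ⟨rfl, rfl⟩ := h'
          exact Or.inl ⟨h, fun e => by_contra fun e' => hc ⟨e, e'⟩⟩
      · rintro (⟨h, h'⟩ | ⟨rfl, h, h'⟩)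
        · refine ⟨x, y, h, ?_⟩
          rw [if_neg]
          rintro ⟨e, e'⟩
          exact e' (h' e)
        · exact ⟨a, y, h, by simp [h']⟩
    have hTT : IsSpanningOutTreeOn Finset.univ A r T := by
      rw [aux_char]
      refine ⟨?_, by simp, by simp, ?_, ?_, ?_⟩
      · rintro ⟨x, y⟩ h0
        rcases (hT _ _).1 h0 with ⟨rfl, rfl⟩ | ⟨h, h'⟩ | ⟨rfl, h, h'⟩
        · exact hab
        · rcases hA' _ _ h with h | h | ⟨rfl, hx, hxb⟩
          · exact h
          · exact h' h.1
          · rcases hp x with h7 | h7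
            · exact absurd (congrArg Prod.fst (honly _ hxb h7 hb)) hx
            · exact absurd h (hback _ h7)
        · rcases hA' _ _ h with h | h | h
          · exact absurd h h'
          · exact h.2
          · exact absurd rfl h.2.1
      · intro x h
        rcases (hT _ _).1 h with ⟨_, h⟩ | ⟨h, _⟩ | ⟨_, h, _⟩
        · exact hrb h
        · exact h4 _ h
        · exact h4 _ h
      · intro x y v hx hy
        have hb' : ∀ x, (x, b) ∉ S := fun x h => (hnb _ _ h).2 rfl
        rcases (hT _ _).1 hx with ⟨rfl, rfl⟩ | ⟨h, h'⟩ | ⟨rfl, h, h'⟩ <;>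
        rcases (hT _ _).1 hy with ⟨rfl, e⟩ | ⟨g, g'⟩ | ⟨rfl, g, g'⟩
        · rfl
        · exact absurd g (hb' _)
        · exact absurd g (hb' _)
        · exact absurd h (e ▸ hb' _)
        · exact h5 _ _ _ h g
        · have := h5 _ _ _ h g
          subst this
          exact absurd (h' rfl) g'
        · exact absurd h (e ▸ hb' _)
        · have := h5 _ _ _ h g
          subst this
          exact absurd (g' rfl) h'
        · rfl
      · have habT : (a, b) ∈ T := (hT _ _).2 (Or.inl ⟨rfl, rfl⟩)
        have key : ∀ v, DReach S r v → DReach T r v := by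
          intro v h
          induction h with
          | refl => exact Relation.ReflTransGen.refl
          | @tail u v _ huv ih =>
            by_cases hc : u = a → (u, v) ∈ A
            · exact Relation.ReflTransGen.tail ih ((hT _ _).2 (Or.inr (Or.inl ⟨huv, hc⟩)))
            · push Not at hc
              obtain ⟨rfl, hc⟩ := hc
              exact Relation.ReflTransGen.tail (Relation.ReflTransGen.tail ih habT)
                ((hT _ _).2 (Or.inr (Or.inr ⟨rfl, huv, hc⟩)))
        intro v _
        by_cases hv : v = b
        · subst hv
          exact Relation.ReflTransGen.tail (key a (h6 a (by simp [hne]))) habT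
        · exact key v (h6 v (by simp [hv]))
    refine ⟨T, hTT, hk.trans (Finset.card_le_card ?_)⟩
    intro v hv
    rw [aux_leaf hTT]
    obtain ⟨hv1, hv2⟩ := (hl v).1 hv
    refine ⟨Finset.mem_univ _, ?_⟩
    intro y h
    rcases (hT _ _).1 h with ⟨rfl, _⟩ | ⟨h, _⟩ | ⟨rfl, _⟩
    · exact hv2 _ had
    · exact hv2 _ h
    · exact absurd hv1 (by simp)
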